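/- For every p ∈ [2,∞) there exists a constant K_p ∈ (0,∞) such that for every integer n ≥ 2 the bi-Lipschitz distortion of the ball B_n in the sequence space ℓ_p satisfies c_{ℓ_p}(B_n, d_W) ≥ K_p (log n)^{1/p}; equivalently, if D ≥ 1 and f : B_n → ℓ_p satisfies d_W(x,y) ≤ ‖f(x)−f(y)‖_p ≤ D·d_W(x,y) for all x,y ∈ B_n, then D ≥ K_p (log n)^{1/p}. -/

import Mathlib

/-- The discrete Heisenberg group, as ℤ³ with the Heisenberg multiplication
(equivalently, unit upper-triangular 3×3 integer matrices). -/
@[ext]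
structure DH where
  x : ℤ
  y : ℤ
  z : ℤ

namespace DH

instance : Mul DH := ⟨fun a b => ⟨a.x + b.x, a.y + b.y, a.z + b.z + a.x * b.y⟩⟩
instance : One DH := ⟨⟨0, 0, 0⟩⟩
instance : Inv DH := ⟨fun a => ⟨-a.x, -a.y, -a.z + a.x * a.y⟩⟩

lemma mul_def (a b : DH) : a * b = ⟨a.x + b.x, a.y + b.y, a.z + b.z + a.x * b.y⟩ := rfl
lemma one_def : (1 : DH) = ⟨0, 0, 0⟩ := rfl
lemma inv_def (a : DH) : a⁻¹ = ⟨-a.x, -a.y, -a.z + a.x * a.y⟩ := rfl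

instance : Group DH where
  mul_assoc a b c := by
    simp only [mul_def, mk.injEq]
    refine ⟨by ring, by ring, by ring⟩
  one_mul a := by simp [mul_def, one_def]
  mul_one a := by simp [mul_def, one_def]
  inv_mul_cancel a := by
    simp only [mul_def, inv_def, one_def, mk.injEq]
    refine ⟨by ring, by ring, by ring⟩

/-- The generator `a`. -/
def gA : DH := ⟨1, 0, 0⟩

/-- The generator `b`. -/
def gB : DH := ⟨0, 1, 0⟩

/-- The commutator `c = aba⁻¹b⁻¹`, a generator of the center. -/
def gC : DH := gA * gB * gA⁻¹ * gB⁻¹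

/-- Word length with respect to the symmetric generating set `{a, b, a⁻¹, b⁻¹}`. -/
noncomputable def wordLen (g : DH) : ℕ :=
  sInf {n | ∃ l : List DH, l.length = n ∧
    (∀ s ∈ l, s ∈ ({gA, gB, gA⁻¹, gB⁻¹} : Set DH)) ∧ l.prod = g}

/-- The left-invariant word metric on the discrete Heisenberg group. -/
noncomputable def dW (g h : DH) : ℕ := wordLen (g⁻¹ * h)

/-- The closed ball of radius `n` centered at the identity. -/
def Ball (n : ℕ) : Set DH := {g | dW g 1 ≤ n}

end DH

namespace DH

/-- `g` is a product of at most `n` elements of `{a, b, a⁻¹, b⁻¹}`. -/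
def HasWord (n : ℕ) (g : DH) : Prop :=
  ∃ l : List DH, l.length ≤ n ∧
    (∀ s ∈ l, s ∈ ({gA, gB, gA⁻¹, gB⁻¹} : Set DH)) ∧ l.prod = g

lemma HasWord.mono {m n : ℕ} {g : DH} (h : HasWord m g) (hmn : m ≤ n) : HasWord n g := by
  obtain ⟨l, hl, hs, hg⟩ := h
  exact ⟨l, hl.trans hmn, hs, hg⟩

lemma HasWord.mul {m n : ℕ} {g h : DH} (hg : HasWord m g) (hh : HasWord n h) :
    HasWord (m + n) (g * h) := by
  obtain ⟨l, hl, hs, rfl⟩ := hg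
  obtain ⟨l', hl', hs', rfl⟩ := hh
  refine ⟨l ++ l', by simp; omega, fun s h => ?_, by simp⟩
  rcases List.mem_append.1 h with h | h
  exacts [hs s h, hs' s h]

lemma HasWord.inv {n : ℕ} {g : DH} (hg : HasWord n g) : HasWord n g⁻¹ := by
  obtain ⟨l, hl, hs, rfl⟩ := hg
  refine ⟨(l.map (·⁻¹)).reverse, by simpa using hl, fun s h => ?_, (List.prod_inv_reverse l).symm⟩
  simp only [List.mem_reverse, List.mem_map] at h
  obtain ⟨t, ht, rfl⟩ := h
  have := hs t ht
  simp only [Set.mem_insert_iff, Set.mem_singleton_iff] at this ⊢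
  rcases this with rfl | rfl | rfl | rfl <;> simp

lemma HasWord.pow {n : ℕ} {g : DH} (hg : HasWord n g) (k : ℕ) : HasWord (k * n) (g ^ k) := by
  induction k with
  | zero => exact ⟨[], by simp⟩
  | succ k ih => simpa [pow_succ, add_mul] using ih.mul hg

lemma HasWord.zpow {n : ℕ} {g : DH} (hg : HasWord n g) (k : ℤ) :
    HasWord (k.natAbs * n) (g ^ k) := by
  obtain ⟨m, rfl | rfl⟩ := k.eq_nat_or_neg
  · simpa using hg.pow m
  · simpa using (hg.pow m).inv

lemma hasWord_gA : HasWord 1 gA := ⟨[gA], by simp⟩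

lemma hasWord_gB : HasWord 1 gB := ⟨[gB], by simp⟩

lemma gA_zpow (k : ℤ) : gA ^ k = ⟨k, 0, 0⟩ := by
  induction k using Int.induction_on with
  | zero => simp [one_def]
  | succ i ih => rw [zpow_add_one, ih]; simp [gA, mul_def]
  | pred i ih => rw [zpow_sub_one, ih]; simp [gA, mul_def, inv_def, sub_eq_add_neg]

lemma gB_zpow (k : ℤ) : gB ^ k = ⟨0, k, 0⟩ := by
  induction k using Int.induction_on with
  | zero => simp [one_def]
  | succ i ih => rw [zpow_add_one, ih]; simp [gB, mul_def]
  | pred i ih => rw [zpow_sub_one, ih]; simp [gB, mul_def, inv_def, sub_eq_add_neg]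

lemma gC_eq : gC = ⟨0, 0, 1⟩ := by
  simp [gC, gA, gB, mul_def, inv_def]

lemma gC_pow (k : ℕ) : gC ^ k = ⟨0, 0, k⟩ := by
  induction k with
  | zero => simp [one_def]
  | succ i ih => rw [pow_succ, ih, gC_eq]; simp [mul_def]

lemma gC_mul_comm (g : DH) : gC * g = g * gC := by
  simp [gC_eq, mul_def, add_comm]

lemma eq_zpow_prod (x y q r s : ℤ) :
    (⟨x, y, q * r + s⟩ : DH) = gB ^ y * gA ^ x * (gA ^ q * gB ^ r * gA ^ (-q) * gB ^ (-r)) *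
      (gA ^ s * gB ^ (1 : ℤ) * gA ^ (-s) * gB ^ (-1 : ℤ)) := by
  simp only [gA_zpow, gB_zpow, mul_def, mk.injEq]
  refine ⟨by ring, by ring, by ring⟩

lemma hasWord_of_box {r : ℕ} (hr : 1 ≤ r) {g : DH} (hx : |g.x| ≤ r) (hy : |g.y| ≤ r)
    (hz : |g.z| ≤ r ^ 2) : HasWord (8 * r) g := by
  obtain ⟨x, y, z⟩ := g
  simp only at hx hy hz
  have hr' : (0 : ℤ) < r := by exact_mod_cast hr
  have hdiv : z / r * r + z % r = z := by rw [mul_comm]; exact Int.mul_ediv_add_emod z r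
  have hs0 := Int.emod_nonneg z hr'.ne'
  have hs1 := Int.emod_lt_of_pos z hr'
  have hq : |z / r| ≤ r := by
    rw [abs_le] at hz ⊢
    constructor
    · exact (Int.le_ediv_iff_mul_le hr').2 (by linarith [hz.1, sq (r : ℤ)])
    · exact Int.ediv_le_of_le_mul hr' (by linarith [hz.2, sq (r : ℤ)])
  rw [← hdiv, eq_zpow_prod]
  refine HasWord.mono ((((hasWord_gB.zpow y).mul (hasWord_gA.zpow x)).mul
    ((((hasWord_gA.zpow _).mul (hasWord_gB.zpow _)).mul (hasWord_gA.zpow _)).mul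
      (hasWord_gB.zpow _))).mul
    ((((hasWord_gA.zpow _).mul (hasWord_gB.zpow _)).mul (hasWord_gA.zpow _)).mul
      (hasWord_gB.zpow _))) ?_
  generalize z / (r : ℤ) = q at *
  generalize z % (r : ℤ) = s at *
  simp only [Int.natAbs_neg]
  rw [abs_le] at hx hy hq
  omega

lemma HasWord.box {n : ℕ} {g : DH} (hg : HasWord n g) :
    |g.x| ≤ n ∧ |g.y| ≤ n ∧ |g.z| ≤ n ^ 2 := by
  obtain ⟨l, hl, hs, rfl⟩ := hg
  induction l generalizing n with
  | nil => simp [one_def]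
  | cons s l ih =>
    obtain ⟨m, rfl⟩ : ∃ m, n = m + 1 := ⟨n - 1, by simp at hl; omega⟩
    obtain ⟨h1, h2, h3⟩ := ih (n := m) (by simpa using hl) fun t ht => hs t (by simp [ht])
    have := hs s (by simp)
    simp only [Set.mem_insert_iff, Set.mem_singleton_iff] at this
    rw [List.prod_cons]
    generalize l.prod = g at *
    rw [abs_le] at h1 h2 h3
    rcases this with rfl | rfl | rfl | rfl <;>
    · simp only [gA, gB, inv_def, mul_def, abs_le]
      push_cast
      refine ⟨⟨?_, ?_⟩, ⟨?_, ?_⟩, ?_, ?_⟩ <;> nlinarith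

lemma exists_hasWord (g : DH) : ∃ n, HasWord n g := by
  refine ⟨_, hasWord_of_box (r := g.x.natAbs + g.y.natAbs + g.z.natAbs + 1) (by omega) ?_ ?_ ?_⟩
  · push_cast; linarith [abs_nonneg g.x, abs_nonneg g.y, abs_nonneg g.z]
  · push_cast; linarith [abs_nonneg g.x, abs_nonneg g.y, abs_nonneg g.z]
  · push_cast; nlinarith [abs_nonneg g.x, abs_nonneg g.y, abs_nonneg g.z]

lemma wordLen_le_iff {n : ℕ} {g : DH} : wordLen g ≤ n ↔ HasWord n g := by
  constructor
  · intro h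
    have hne : {n | ∃ l : List DH, l.length = n ∧
        (∀ s ∈ l, s ∈ ({gA, gB, gA⁻¹, gB⁻¹} : Set DH)) ∧ l.prod = g}.Nonempty := by
      obtain ⟨n, l, -, hl⟩ := exists_hasWord g
      exact ⟨l.length, l, rfl, hl⟩
    obtain ⟨l, hl, hs⟩ := Nat.sInf_mem hne
    exact ⟨l, hl.le.trans h, hs⟩
  · rintro ⟨l, hl, hs⟩
    exact (Nat.sInf_le ⟨l, rfl, hs⟩ : wordLen g ≤ l.length).trans hl

lemma hasWord_wordLen (g : DH) : HasWord (wordLen g) g := wordLen_le_iff.1 le_rfl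

lemma wordLen_inv (g : DH) : wordLen g⁻¹ = wordLen g :=
  le_antisymm (wordLen_le_iff.2 (hasWord_wordLen g).inv)
    (wordLen_le_iff.2 (by simpa using (hasWord_wordLen g⁻¹).inv))

lemma wordLen_mul_le (g h : DH) : wordLen (g * h) ≤ wordLen g + wordLen h :=
  wordLen_le_iff.2 ((hasWord_wordLen g).mul (hasWord_wordLen h))

lemma wordLen_le_wordLen_mul_add (g h : DH) : wordLen g ≤ wordLen (g * h) + wordLen h := by
  simpa [wordLen_inv] using wordLen_mul_le (g * h) h⁻¹

lemma dW_mul_right (g h : DH) : dW g (g * h) = wordLen h := by simp [dW]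

lemma mem_ball_iff {n : ℕ} {g : DH} : g ∈ Ball n ↔ wordLen g ≤ n := by
  simp [Ball, dW, wordLen_inv]

lemma dW_one_right (g : DH) : dW g 1 = wordLen g := by simp [dW, wordLen_inv]

lemma wordLen_gA_le : wordLen gA ≤ 1 := wordLen_le_iff.2 hasWord_gA

lemma wordLen_gB_le : wordLen gB ≤ 1 := wordLen_le_iff.2 hasWord_gB

lemma wordLen_gC_two_pow_le (i : ℕ) : (wordLen (gC ^ 2 ^ i) : ℝ) ≤ 16 * √2 ^ i := by
  have h : HasWord (8 * 2 ^ ((i + 1) / 2)) (gC ^ 2 ^ i) := by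
    rw [gC_pow]
    refine hasWord_of_box Nat.one_le_two_pow ?_ ?_ ?_
    · simp
    · simp
    · push_cast
      rw [abs_of_nonneg (by positivity), ← pow_mul]
      exact pow_le_pow_right₀ (by norm_num) (by omega)
  have h1 : (2 : ℝ) ^ ((i + 1) / 2) ≤ √2 ^ (i + 1) := by
    have hs : (2 : ℝ) = √2 ^ 2 := (Real.sq_sqrt (by norm_num)).symm
    calc (2 : ℝ) ^ ((i + 1) / 2) = √2 ^ (2 * ((i + 1) / 2)) := by rw [pow_mul, ← hs]
      _ ≤ √2 ^ (i + 1) := pow_le_pow_right₀ (Real.one_le_sqrt.2 (by norm_num)) (by omega)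
  have h2 : √2 ≤ 2 := Real.sqrt_le_iff.2 (by norm_num)
  calc (wordLen (gC ^ 2 ^ i) : ℝ) ≤ ((8 * 2 ^ ((i + 1) / 2) : ℕ) : ℝ) := by
        exact_mod_cast wordLen_le_iff.2 h
    _ ≤ 8 * (√2 ^ i * √2) := by push_cast; rw [← pow_succ]; linarith
    _ ≤ 16 * √2 ^ i := by nlinarith [show (0 : ℝ) ≤ √2 ^ i by positivity]

lemma le_wordLen_gC_two_pow (i : ℕ) : √2 ^ i ≤ (wordLen (gC ^ 2 ^ i) : ℝ) := by
  have h := (hasWord_wordLen (gC ^ 2 ^ i)).box.2.2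
  rw [gC_pow] at h ⊢
  simp only [Nat.cast_pow, Nat.cast_ofNat, abs_pow, Nat.abs_ofNat] at h
  have h' : (2 : ℝ) ^ i ≤ (wordLen ⟨0, 0, (2 ^ i : ℕ)⟩ : ℝ) ^ 2 := by
    push_cast
    exact_mod_cast h
  refine le_of_sq_le_sq ?_ (by positivity)
  rwa [← pow_mul, mul_comm, pow_mul, Real.sq_sqrt (by norm_num)]

end DH

section VerticalSemigroup

open Polynomial

/-- The two-point `p`-uniform convexity inequality of Clarkson. -/
def SatisfiesClarkson (p : ℝ) (V : Type*) [NormedAddCommGroup V] [NormedSpace ℝ V] : Prop :=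
  ∀ u v : V, ‖(1 / 2 : ℝ) • (u + v)‖ ^ p + ‖(1 / 2 : ℝ) • (u - v)‖ ^ p ≤ (‖u‖ ^ p + ‖v‖ ^ p) / 2

/-- The polynomial `X ^ (2 ^ j) - 1`. -/
noncomputable def dyadicShift (j : ℕ) : ℝ[X] := X ^ 2 ^ j - 1

/-- The polynomial `2⁻ʲ (1 + X + ⋯ + X ^ (2 ^ j - 1))`, in product form. -/
noncomputable def dyadicAvg : ℕ → ℝ[X]
  | 0 => 1
  | j + 1 => dyadicAvg j * (C (1 / 2) * (1 + X ^ 2 ^ j))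

/-- The difference `2 (dyadicAvg (j + 1) - dyadicAvg j)` of consecutive averages. -/
noncomputable def dyadicDiff (j : ℕ) : ℝ[X] := dyadicAvg j * dyadicShift j

lemma dyadicShift_mul_dyadicAvg {k j : ℕ} (h : k ≤ j) :
    dyadicShift k * dyadicAvg j = C ((1 / 2) ^ (j - k)) * (dyadicAvg k * dyadicShift j) := by
  induction j, h using Nat.le_induction with
  | base => simp [mul_comm]
  | succ j hj ih =>
    rw [dyadicAvg, ← mul_assoc, ih, Nat.succ_sub hj, pow_succ (1 / 2 : ℝ), C_mul, dyadicShift,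
      dyadicShift, pow_succ 2 j, pow_mul]
    ring

/-- A generalized average, tangent to the identity to second order at `X = 1`. -/
noncomputable def dyadicSquareAvg (j : ℕ) : ℝ[X] := 1 - (1 - dyadicAvg j ^ 2) ^ 2

lemma dyadicSquareAvg_zero : dyadicSquareAvg 0 = 1 := by simp [dyadicSquareAvg, dyadicAvg]

lemma dyadicSquareAvg_sub_succ (j : ℕ) :
    dyadicSquareAvg j - dyadicSquareAvg (j + 1) =
      C (-1 / 4) * (3 + X ^ 2 ^ j) * (dyadicAvg j *
        ((1 + dyadicAvg j) * (1 - dyadicAvg j) +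
          (1 + dyadicAvg (j + 1)) * (1 - dyadicAvg (j + 1))) * dyadicDiff j) := by
  have h2 : (C (1 / 2) : ℝ[X]) * 2 = 1 := by
    rw [← C_ofNat, ← C_mul]; norm_num
  have h4 : (C (-1 / 4) : ℝ[X]) = - C (1 / 2) ^ 2 := by
    rw [← C_pow, ← C_neg]; norm_num
  simp only [dyadicSquareAvg, dyadicDiff, dyadicAvg, dyadicShift, h4]
  generalize (C (1 / 2) : ℝ[X]) = c at *
  have h3 : c ^ 2 * 4 = 1 := by linear_combination (c * 2 + 1) * h2
  generalize dyadicAvg j = N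
  generalize (X ^ 2 ^ j : ℝ[X]) = Y
  have : N ^ 2 - (N * (c * (1 + Y))) ^ 2 = - c ^ 2 * (3 + Y) * (N * (N * (Y - 1))) := by
    linear_combination (-N ^ 2) * h3
  linear_combination (2 - N ^ 2 - (N * (c * (1 + Y))) ^ 2) * this

lemma sqrt_two_mem_Icc : √2 ∈ Set.Icc (1.4 : ℝ) 1.5 :=
  ⟨Real.le_sqrt_of_sq_le (by norm_num), Real.sqrt_le_iff.2 (by norm_num)⟩

variable {V : Type*} [NormedAddCommGroup V] [NormedSpace ℝ V] {T : Module.End ℝ V}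

lemma aeval_mul_apply (T : Module.End ℝ V) (P Q : ℝ[X]) (v : V) :
    aeval T (P * Q) v = aeval T P (aeval T Q v) := by
  simp [Module.End.mul_apply]

lemma norm_pow_apply_of_isometry (hT : ∀ v, ‖T v‖ = ‖v‖) (n : ℕ) (v : V) :
    ‖(T ^ n) v‖ = ‖v‖ := by
  induction n generalizing v with
  | zero => simp
  | succ n ih => rw [pow_succ, Module.End.mul_apply, ih, hT]

lemma aeval_dyadicShift (T : Module.End ℝ V) (j : ℕ) (v : V) :
    aeval T (dyadicShift j) v = (T ^ 2 ^ j) v - v := by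
  simp [dyadicShift]

lemma norm_aeval_dyadicShift_le (hT : ∀ v, ‖T v‖ = ‖v‖) (j : ℕ) (v : V) :
    ‖aeval T (dyadicShift j) v‖ ≤ 2 * ‖v‖ := by
  have := norm_sub_le ((T ^ 2 ^ j) v) v
  rw [norm_pow_apply_of_isometry hT] at this
  rw [aeval_dyadicShift]
  linarith

lemma aeval_dyadicAvg_succ (T : Module.End ℝ V) (j : ℕ) (v : V) :
    aeval T (dyadicAvg (j + 1)) v =
      (1 / 2 : ℝ) • (aeval T (dyadicAvg j) v + (T ^ 2 ^ j) (aeval T (dyadicAvg j) v)) := by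
  rw [dyadicAvg, mul_comm, aeval_mul_apply]
  simp

lemma norm_aeval_dyadicAvg_le (hT : ∀ v, ‖T v‖ = ‖v‖) (j : ℕ) (v : V) :
    ‖aeval T (dyadicAvg j) v‖ ≤ ‖v‖ := by
  induction j with
  | zero => simp [dyadicAvg]
  | succ j ih =>
    rw [aeval_dyadicAvg_succ, norm_smul]
    have := norm_add_le (aeval T (dyadicAvg j) v) ((T ^ 2 ^ j) (aeval T (dyadicAvg j) v))
    rw [norm_pow_apply_of_isometry hT] at this
    norm_num
    linarith

lemma norm_aeval_one_add_dyadicAvg_le (hT : ∀ v, ‖T v‖ = ‖v‖) (j : ℕ) (v : V) :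
    ‖aeval T (1 + dyadicAvg j) v‖ ≤ 2 * ‖v‖ := by
  have h := norm_add_le v (aeval T (dyadicAvg j) v)
  simp only [map_add, map_one, LinearMap.add_apply, Module.End.one_apply]
  linarith [norm_aeval_dyadicAvg_le hT j v]

lemma norm_aeval_one_sub_dyadicAvg_le (hT : ∀ v, ‖T v‖ = ‖v‖) {w : V} {B : ℝ}
    (hB : ∀ i, ‖aeval T (dyadicShift i) w‖ ≤ B * √2 ^ i) (j : ℕ) :
    ‖aeval T (1 - dyadicAvg j) w‖ ≤ 2 * B * √2 ^ j := by
  have hB0 : 0 ≤ B := by simpa using (norm_nonneg _).trans (hB 0)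
  induction j with
  | zero => simpa [dyadicAvg] using hB0
  | succ j ih =>
    have h2 : (C (1 / 2) : ℝ[X]) * 2 = 1 := by
      rw [← C_ofNat, ← C_mul]; norm_num
    have key : 1 - dyadicAvg (j + 1) =
        (1 - dyadicAvg j) - C (1 / 2) * (dyadicAvg j * dyadicShift j) := by
      rw [dyadicAvg, dyadicShift]
      linear_combination (-dyadicAvg j) * h2
    have h1 : ‖aeval T (C (1 / 2) * (dyadicAvg j * dyadicShift j)) w‖ ≤ 1 / 2 * (B * √2 ^ j) := by
      rw [aeval_mul_apply, aeval_mul_apply, aeval_C, Module.algebraMap_end_apply, norm_smul]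
      rw [Real.norm_of_nonneg (by norm_num)]
      gcongr
      exact (norm_aeval_dyadicAvg_le hT j _).trans (hB j)
    rw [key, map_sub, LinearMap.sub_apply]
    refine (norm_sub_le _ _).trans ((add_le_add ih h1).trans ?_)
    have hs : 0 ≤ B * √2 ^ j := by positivity
    rw [pow_succ]
    nlinarith [sqrt_two_mem_Icc.1]

lemma sum_norm_aeval_dyadicDiff_rpow_le {p : ℝ} (hV : SatisfiesClarkson p V)
    (hT : ∀ v, ‖T v‖ = ‖v‖) (v : V) (J : ℕ) :
    ∑ j ∈ Finset.range J, ‖aeval T (dyadicDiff j) v‖ ^ p ≤ 2 ^ p * ‖v‖ ^ p := by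
  have key : ∀ j, ‖aeval T (dyadicDiff j) v‖ ^ p ≤
      2 ^ p * (‖aeval T (dyadicAvg j) v‖ ^ p - ‖aeval T (dyadicAvg (j + 1)) v‖ ^ p) := by
    intro j
    have h := hV (aeval T (dyadicAvg j) v) ((T ^ 2 ^ j) (aeval T (dyadicAvg j) v))
    rw [← aeval_dyadicAvg_succ, norm_pow_apply_of_isometry hT, norm_smul, norm_sub_rev] at h
    have hd : aeval T (dyadicDiff j) v =
        (T ^ 2 ^ j) (aeval T (dyadicAvg j) v) - aeval T (dyadicAvg j) v := by
      rw [dyadicDiff, mul_comm, aeval_mul_apply, aeval_dyadicShift]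
    rw [← hd, Real.mul_rpow (norm_nonneg _) (norm_nonneg _), Real.norm_of_nonneg (by norm_num),
      Real.div_rpow zero_le_one zero_le_two, Real.one_rpow] at h
    have h2 : (0 : ℝ) < 2 ^ p := by positivity
    rw [add_self_div_two, ← le_sub_iff_add_le', div_mul_eq_mul_div, one_mul, div_le_iff₀ h2] at h
    linarith
  calc ∑ j ∈ Finset.range J, ‖aeval T (dyadicDiff j) v‖ ^ p
      ≤ ∑ j ∈ Finset.range J,
        2 ^ p * (‖aeval T (dyadicAvg j) v‖ ^ p - ‖aeval T (dyadicAvg (j + 1)) v‖ ^ p) :=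
        Finset.sum_le_sum fun j _ => key j
    _ = 2 ^ p * (‖v‖ ^ p - ‖aeval T (dyadicAvg J) v‖ ^ p) := by
        rw [← Finset.mul_sum, Finset.sum_range_sub']
        simp [dyadicAvg]
    _ ≤ 2 ^ p * ‖v‖ ^ p := by
        gcongr
        linarith [Real.rpow_nonneg (norm_nonneg (aeval T (dyadicAvg J) v)) p]

lemma sum_norm_aeval_dyadicDiff_le {p : ℝ} (hp : 1 ≤ p) (hV : SatisfiesClarkson p V)
    (hT : ∀ v, ‖T v‖ = ‖v‖) (v : V) (J : ℕ) :
    ∑ j ∈ Finset.range J, ‖aeval T (dyadicDiff j) v‖ ≤ 2 * (J : ℝ) ^ (1 - 1 / p) * ‖v‖ := by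
  have hp0 : 0 < p := by linarith
  have h := Real.rpow_sum_le_const_mul_sum_rpow_of_nonneg (Finset.range J)
    (f := fun j => ‖aeval T (dyadicDiff j) v‖) hp (fun _ _ => norm_nonneg _)
  rw [Finset.card_range] at h
  refine (Real.rpow_le_rpow_iff (Finset.sum_nonneg fun _ _ => norm_nonneg _) (by positivity)
    hp0).1 (h.trans ?_)
  rw [Real.mul_rpow (by positivity) (by positivity), Real.mul_rpow (by positivity) (by positivity),
    ← Real.rpow_mul (by positivity)]
  have he : (1 - 1 / p) * p = p - 1 := by field_simp
  rw [he, mul_right_comm, mul_comm]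
  gcongr
  exact sum_norm_aeval_dyadicDiff_rpow_le hV hT v J

lemma norm_aeval_dyadicShift_mul_dyadicAvg_le (hT : ∀ v, ‖T v‖ = ‖v‖) (k j : ℕ) (v : V) :
    ‖aeval T (dyadicShift k * dyadicAvg j) v‖ ≤ 2 * (1 / 2) ^ (j - k) * ‖v‖ := by
  rcases le_total k j with h | h
  · rw [dyadicShift_mul_dyadicAvg h, aeval_mul_apply, aeval_mul_apply, aeval_C,
      Module.algebraMap_end_apply, norm_smul, Real.norm_of_nonneg (by positivity),
      mul_comm (2 : ℝ), mul_assoc]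
    gcongr
    exact (norm_aeval_dyadicAvg_le hT _ _).trans (norm_aeval_dyadicShift_le hT _ _)
  · rw [Nat.sub_eq_zero_of_le h, pow_zero, mul_one, aeval_mul_apply]
    refine (norm_aeval_dyadicShift_le hT _ _).trans ?_
    gcongr
    exact norm_aeval_dyadicAvg_le hT _ _

lemma norm_aeval_dyadicSquareAvg_sub_succ_le (hT : ∀ v, ‖T v‖ = ‖v‖) (k j : ℕ) {v : V} {B : ℝ}
    (hB : ∀ i, ‖aeval T (dyadicShift i) (aeval T (dyadicDiff j) v)‖ ≤ B * √2 ^ i) :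
    ‖aeval T (dyadicShift k * (dyadicSquareAvg j - dyadicSquareAvg (j + 1))) v‖ ≤
      20 * (1 / 2) ^ (j - k) * (B * √2 ^ j) := by
  have hB0 : 0 ≤ B := by simpa using (norm_nonneg _).trans (hB 0)
  set w := aeval T (dyadicDiff j) v
  have h1 : ∀ i, ‖aeval T ((1 + dyadicAvg i) * (1 - dyadicAvg i)) w‖ ≤ 4 * B * √2 ^ i := by
    intro i
    rw [aeval_mul_apply]
    linarith [norm_aeval_one_add_dyadicAvg_le hT i (aeval T (1 - dyadicAvg i) w),
      norm_aeval_one_sub_dyadicAvg_le hT hB i]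
  have h2 : ‖aeval T ((1 + dyadicAvg j) * (1 - dyadicAvg j) +
      (1 + dyadicAvg (j + 1)) * (1 - dyadicAvg (j + 1))) w‖ ≤ 10 * (B * √2 ^ j) := by
    rw [map_add, LinearMap.add_apply]
    refine (norm_add_le _ _).trans ((add_le_add (h1 j) (h1 (j + 1))).trans ?_)
    have hs : 0 ≤ B * √2 ^ j := by positivity
    rw [pow_succ]
    nlinarith [sqrt_two_mem_Icc.2]
  have h3 : ∀ u, ‖aeval T (C (-1 / 4 : ℝ) * (3 + X ^ 2 ^ j)) u‖ ≤ ‖u‖ := by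
    intro u
    have hu : aeval T (C (-1 / 4 : ℝ) * (3 + X ^ 2 ^ j)) u =
        (-1 / 4 : ℝ) • ((3 : ℝ) • u + (T ^ 2 ^ j) u) := by
      rw [aeval_mul_apply, show (3 : ℝ[X]) = C 3 from (C_ofNat 3).symm]
      simp only [map_add, aeval_C, map_pow, aeval_X, LinearMap.add_apply,
        Module.algebraMap_end_apply, smul_add]
    rw [hu, norm_smul]
    have := norm_add_le ((3 : ℝ) • u) ((T ^ 2 ^ j) u)
    rw [norm_smul, norm_pow_apply_of_isometry hT] at this
    norm_num at this ⊢
    linarith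
  rw [dyadicSquareAvg_sub_succ, mul_left_comm, aeval_mul_apply T (C _ * _), mul_assoc (dyadicAvg j),
    ← mul_assoc (dyadicShift k), aeval_mul_apply T (dyadicShift k * _), aeval_mul_apply T (_ + _)]
  refine (h3 _).trans ((norm_aeval_dyadicShift_mul_dyadicAvg_le hT k j _).trans ?_)
  calc _ ≤ 2 * (1 / 2 : ℝ) ^ (j - k) * (10 * (B * √2 ^ j)) := by gcongr
    _ = _ := by ring

lemma norm_aeval_dyadicShift_mul_dyadicSquareAvg_le (hT : ∀ v, ‖T v‖ = ‖v‖) {k J : ℕ}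
    (v : V) :
    ‖aeval T (dyadicShift k * dyadicSquareAvg J) v‖ ≤ 6 * (1 / 2) ^ (J - k) * ‖v‖ := by
  have h : dyadicShift k * dyadicSquareAvg J =
      (dyadicShift k * dyadicAvg J) * (dyadicAvg J * (1 + (1 + dyadicAvg J) * (1 - dyadicAvg J))) := by
    rw [dyadicSquareAvg]; ring
  have h1 : ‖aeval T (2 - dyadicAvg J * dyadicAvg J) v‖ ≤ 3 * ‖v‖ := by
    have h2 := norm_sub_le ((2 : ℝ) • v) (aeval T (dyadicAvg J) (aeval T (dyadicAvg J) v))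
    have h3 := (norm_aeval_dyadicAvg_le hT J _).trans (norm_aeval_dyadicAvg_le hT J v)
    rw [map_sub, LinearMap.sub_apply, aeval_mul_apply, show (2 : ℝ[X]) = C 2 from (C_ofNat 2).symm,
      aeval_C, Module.algebraMap_end_apply]
    rw [norm_smul] at h2
    norm_num at h2
    linarith
  rw [h, show 1 + (1 + dyadicAvg J) * (1 - dyadicAvg J) = 2 - dyadicAvg J * dyadicAvg J by ring,
    aeval_mul_apply T (dyadicShift k * _), aeval_mul_apply T (dyadicAvg J)]
  refine (norm_aeval_dyadicShift_mul_dyadicAvg_le hT k J _).trans ?_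
  calc _ ≤ 2 * (1 / 2 : ℝ) ^ (J - k) * (3 * ‖v‖) := by
        gcongr
        exact (norm_aeval_dyadicAvg_le hT J _).trans h1
    _ = _ := by ring

lemma norm_aeval_dyadicShift_le_sum (T : Module.End ℝ V) (k J : ℕ) (v : V) :
    ‖aeval T (dyadicShift k) v‖ ≤ ∑ j ∈ Finset.range J,
        ‖aeval T (dyadicShift k * (dyadicSquareAvg j - dyadicSquareAvg (j + 1))) v‖ +
      ‖aeval T (dyadicShift k * dyadicSquareAvg J) v‖ := by
  have h : dyadicShift k = ∑ j ∈ Finset.range J,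
      dyadicShift k * (dyadicSquareAvg j - dyadicSquareAvg (j + 1)) +
        dyadicShift k * dyadicSquareAvg J := by
    rw [← Finset.mul_sum, Finset.sum_range_sub', dyadicSquareAvg_zero]
    ring
  conv_lhs => rw [h]
  rw [map_add, LinearMap.add_apply, map_sum, LinearMap.sum_apply]
  exact (norm_add_le _ _).trans (add_le_add_left (norm_sum_le _ _) _)

end VerticalSemigroup

section VerticalHorizontal

open Polynomial DH

lemma sum_pow_dist_le (j J : ℕ) :
    ∑ k ∈ Finset.range J, (√2)⁻¹ ^ ((j - k) + (k - j)) ≤ 7 := by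
  have hs : (√2)⁻¹ ≤ 5 / 7 := by
    rw [inv_le_comm₀ (by positivity) (by norm_num)]
    linarith [sqrt_two_mem_Icc.1]
  have h0 : 0 ≤ (√2)⁻¹ := by positivity
  have hg : ∀ n, ∑ i ∈ Finset.range n, (√2)⁻¹ ^ i ≤ 7 / 2 := by
    intro n
    induction n with
    | zero => norm_num
    | succ n ih =>
      simp only [Finset.sum_range_succ', pow_succ (√2)⁻¹, pow_zero, ← Finset.sum_mul]
      nlinarith
  calc ∑ k ∈ Finset.range J, (√2)⁻¹ ^ ((j - k) + (k - j))
      ≤ ∑ k ∈ Finset.range (j + 1 + J), (√2)⁻¹ ^ ((j - k) + (k - j)) :=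
        Finset.sum_le_sum_of_subset_of_nonneg (by simp) fun _ _ _ => by positivity
    _ = ∑ i ∈ Finset.range (j + 1), (√2)⁻¹ ^ i +
          ∑ i ∈ Finset.range J, (√2)⁻¹ ^ i * (√2)⁻¹ := by
        rw [Finset.sum_range_add, ← Finset.sum_range_reflect]
        congr 1 <;> refine Finset.sum_congr rfl fun i hi => ?_
        · have := Finset.mem_range.1 hi
          congr 1; omega
        · rw [← pow_succ]
          congr 1; omega
    _ ≤ 7 := by
        rw [← Finset.sum_mul]
        nlinarith [hg (j + 1), hg J]

lemma sum_sqrt_two_pow_le (J : ℕ) : ∑ k ∈ Finset.range J, √2 ^ k ≤ 5 / 2 * √2 ^ J := by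
  induction J with
  | zero => norm_num
  | succ J ih =>
    rw [Finset.sum_range_succ, pow_succ]
    nlinarith [sqrt_two_mem_Icc.1, show 0 ≤ √2 ^ J by positivity]

variable {V : Type*} [NormedAddCommGroup V] [NormedSpace ℝ V]

lemma norm_sub_le_of_hasWord {ρ : Representation ℝ DH V} (hρ : ∀ g v, ‖ρ g v‖ = ‖v‖)
    {n : ℕ} {g : DH} (hg : HasWord n g) (v : V) :
    ‖ρ g v - v‖ ≤ n * (‖ρ gA v - v‖ + ‖ρ gB v - v‖) := by
  have hinv : ∀ s, ‖ρ s⁻¹ v - v‖ = ‖ρ s v - v‖ := by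
    intro s
    rw [← hρ s, map_sub, norm_sub_rev, ← Module.End.mul_apply, ← map_mul]
    simp
  obtain ⟨l, hl, hs, rfl⟩ := hg
  induction l generalizing n with
  | nil => simp; positivity
  | cons s l ih =>
    obtain ⟨m, rfl⟩ : ∃ m, n = m + 1 := ⟨n - 1, by simp at hl; omega⟩
    have h1 := ih (n := m) (by simpa using hl) fun t ht => hs t (by simp [ht])
    have h2 : ‖ρ s v - v‖ ≤ ‖ρ gA v - v‖ + ‖ρ gB v - v‖ := by
      have := hs s (by simp)
      simp only [Set.mem_insert_iff, Set.mem_singleton_iff] at this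
      rcases this with rfl | rfl | rfl | rfl <;> simp [hinv]
    have h3 : ρ (s :: l).prod v - v = ρ s (ρ l.prod v - v) + (ρ s v - v) := by
      rw [List.prod_cons, map_mul, Module.End.mul_apply, map_sub]
      abel
    rw [h3]
    refine (norm_add_le _ _).trans ?_
    rw [hρ]
    push_cast
    linarith

lemma aeval_apply_comm {S T : Module.End ℝ V} (h : Commute T S) (P : ℝ[X]) (v : V) :
    S (aeval T P v) = aeval T P (S v) := by
  have : Commute (aeval T P) S := by
    induction P using Polynomial.induction_on' with
    | add P Q hP hQ => rw [map_add]; exact hP.add_left hQ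
    | monomial n a =>
      rw [aeval_monomial]
      exact (Algebra.commute_algebraMap_left a S).mul_left (h.pow_left n)
  exact (LinearMap.congr_fun this v).symm

theorem sum_vertical_le_horizontal {p : ℝ} (hp : 1 ≤ p) (hV : SatisfiesClarkson p V)
    {ρ : Representation ℝ DH V} (hρ : ∀ g v, ‖ρ g v‖ = ‖v‖) (v : V) (J : ℕ) :
    ∑ k ∈ Finset.range J, (√2)⁻¹ ^ k * ‖ρ (gC ^ 2 ^ k) v - v‖ ≤
      4480 * (J : ℝ) ^ (1 - 1 / p) * (‖ρ gA v - v‖ + ‖ρ gB v - v‖) +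
        15 * (√2)⁻¹ ^ J * ‖v‖ := by
  have hT : ∀ v, ‖ρ gC v‖ = ‖v‖ := hρ gC
  have hs0 : (√2)⁻¹ * √2 = 1 := inv_mul_cancel₀ (by positivity)
  have hs2 : (1 / 2 : ℝ) = (√2)⁻¹ * (√2)⁻¹ := by
    rw [← mul_inv, Real.mul_self_sqrt (by norm_num)]; norm_num
  set G : ℕ → ℝ := fun j => ‖aeval (ρ gC) (dyadicDiff j) (ρ gA v - v)‖ +
    ‖aeval (ρ gC) (dyadicDiff j) (ρ gB v - v)‖ with hG
  have hG0 : ∀ j, 0 ≤ G j := fun j => by positivity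
  have hcomm : ∀ g j, ρ g (aeval (ρ gC) (dyadicDiff j) v) - aeval (ρ gC) (dyadicDiff j) v =
      aeval (ρ gC) (dyadicDiff j) (ρ g v - v) := by
    intro g j
    have : Commute (ρ gC) (ρ g) := Commute.map (gC_mul_comm g) ρ
    rw [aeval_apply_comm this, map_sub]
  have hshift : ∀ k u, aeval (ρ gC) (dyadicShift k) u = ρ (gC ^ 2 ^ k) u - u := by
    intro k u
    rw [aeval_dyadicShift, map_pow]
  have hB : ∀ j i, ‖aeval (ρ gC) (dyadicShift i) (aeval (ρ gC) (dyadicDiff j) v)‖ ≤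
      16 * G j * √2 ^ i := by
    intro j i
    rw [hshift]
    refine (norm_sub_le_of_hasWord hρ (hasWord_wordLen _) _).trans ?_
    rw [hcomm, hcomm]
    nlinarith [wordLen_gC_two_pow_le i, hG0 j]
  have hterm : ∀ k j, (√2)⁻¹ ^ k * ‖aeval (ρ gC)
      (dyadicShift k * (dyadicSquareAvg j - dyadicSquareAvg (j + 1))) v‖ ≤
      320 * G j * (√2)⁻¹ ^ ((j - k) + (k - j)) := by
    intro k j
    have hw : (√2)⁻¹ ^ k * ((1 / 2) ^ (j - k) * √2 ^ j) = (√2)⁻¹ ^ ((j - k) + (k - j)) := by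
      rcases le_total k j with h | h
      · obtain ⟨i, rfl⟩ := Nat.exists_eq_add_of_le h
        rw [Nat.add_sub_cancel_left, Nat.sub_eq_zero_of_le h, hs2, mul_pow, pow_add, add_zero]
        calc _ = ((√2)⁻¹ * √2) ^ k * ((√2)⁻¹ * √2) ^ i * (√2)⁻¹ ^ i := by
              simp only [mul_pow]; ring
          _ = _ := by simp
      · obtain ⟨i, rfl⟩ := Nat.exists_eq_add_of_le h
        rw [Nat.add_sub_cancel_left, Nat.sub_eq_zero_of_le h, pow_add, zero_add, pow_zero]
        calc _ = ((√2)⁻¹ * √2) ^ j * (√2)⁻¹ ^ i := by simp only [mul_pow]; ring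
          _ = _ := by simp
    calc _ ≤ (√2)⁻¹ ^ k * (20 * (1 / 2) ^ (j - k) * (16 * G j * √2 ^ j)) := by
          gcongr
          exact norm_aeval_dyadicSquareAvg_sub_succ_le hT k j (hB j)
      _ = 320 * G j * ((√2)⁻¹ ^ k * ((1 / 2) ^ (j - k) * √2 ^ j)) := by ring
      _ = _ := by rw [hw]
  have hrem : ∀ k ∈ Finset.range J, (√2)⁻¹ ^ k *
      ‖aeval (ρ gC) (dyadicShift k * dyadicSquareAvg J) v‖ ≤
      6 * ((√2)⁻¹ ^ J * (√2)⁻¹ ^ J * ‖v‖) * √2 ^ k := by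
    intro k hk
    obtain ⟨i, rfl⟩ := Nat.exists_eq_add_of_le (Finset.mem_range.1 hk).le
    calc _ ≤ (√2)⁻¹ ^ k * (6 * (1 / 2) ^ (k + i - k) * ‖v‖) := by
          gcongr
          exact norm_aeval_dyadicShift_mul_dyadicSquareAvg_le hT v
      _ = 6 * ‖v‖ * (√2)⁻¹ ^ k * ((√2)⁻¹ ^ i) ^ 2 * 1 ^ k := by
          rw [Nat.add_sub_cancel_left, hs2, mul_pow]; ring
      _ = _ := by
          rw [← hs0, mul_pow, pow_add]; ring
  have hsumG : ∑ j ∈ Finset.range J, G j ≤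
      2 * (J : ℝ) ^ (1 - 1 / p) * (‖ρ gA v - v‖ + ‖ρ gB v - v‖) := by
    rw [Finset.sum_add_distrib, mul_add]
    exact add_le_add (sum_norm_aeval_dyadicDiff_le hp hV hT _ J)
      (sum_norm_aeval_dyadicDiff_le hp hV hT _ J)
  calc ∑ k ∈ Finset.range J, (√2)⁻¹ ^ k * ‖ρ (gC ^ 2 ^ k) v - v‖
      ≤ ∑ k ∈ Finset.range J, (∑ j ∈ Finset.range J,
          320 * G j * (√2)⁻¹ ^ ((j - k) + (k - j)) +
            6 * ((√2)⁻¹ ^ J * (√2)⁻¹ ^ J * ‖v‖) * √2 ^ k) := by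
        refine Finset.sum_le_sum fun k hk => ?_
        rw [← hshift]
        calc _ ≤ (√2)⁻¹ ^ k * (∑ j ∈ Finset.range J, ‖aeval (ρ gC)
              (dyadicShift k * (dyadicSquareAvg j - dyadicSquareAvg (j + 1))) v‖ +
              ‖aeval (ρ gC) (dyadicShift k * dyadicSquareAvg J) v‖) := by
              gcongr
              exact norm_aeval_dyadicShift_le_sum _ k J v
          _ ≤ _ := by
              rw [mul_add, Finset.mul_sum]
              exact add_le_add (Finset.sum_le_sum fun j _ => hterm k j) (hrem k hk)
    _ = ∑ j ∈ Finset.range J, 320 * G j *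
          ∑ k ∈ Finset.range J, (√2)⁻¹ ^ ((j - k) + (k - j)) +
        6 * ((√2)⁻¹ ^ J * (√2)⁻¹ ^ J * ‖v‖) * ∑ k ∈ Finset.range J, √2 ^ k := by
        rw [Finset.sum_add_distrib, Finset.sum_comm]
        simp only [Finset.mul_sum]
    _ ≤ ∑ j ∈ Finset.range J, 320 * G j * 7 +
        6 * ((√2)⁻¹ ^ J * (√2)⁻¹ ^ J * ‖v‖) * (5 / 2 * √2 ^ J) := by
        refine add_le_add (Finset.sum_le_sum fun j _ => ?_)
          (mul_le_mul_of_nonneg_left (sum_sqrt_two_pow_le J) (by positivity))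
        exact mul_le_mul_of_nonneg_left (sum_pow_dist_le j J) (mul_nonneg (by norm_num) (hG0 j))
    _ = 2240 * ∑ j ∈ Finset.range J, G j + 15 * (√2)⁻¹ ^ J * ‖v‖ * ((√2)⁻¹ * √2) ^ J := by
        rw [Finset.mul_sum, mul_pow]
        congr 1
        · exact Finset.sum_congr rfl fun j _ => by ring
        · ring
    _ ≤ _ := by
        rw [hs0, one_pow, mul_one]
        linarith

end VerticalHorizontal

section Clarkson

open scoped ENNReal

lemma satisfiesClarkson_real {p : ℝ} (hp : 2 ≤ p) : SatisfiesClarkson p ℝ := by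
  intro u v
  have hq : 1 ≤ p / 2 := by linarith
  have hpow : ∀ a : ℝ, ‖a‖ ^ p = (a ^ 2) ^ (p / 2) := by
    intro a
    rw [← sq_abs, ← Real.rpow_natCast, ← Real.rpow_mul (abs_nonneg a), Real.norm_eq_abs]
    congr 1
    push_cast
    ring
  simp only [hpow, smul_eq_mul]
  refine (Real.add_rpow_le_rpow_add (sq_nonneg _) (sq_nonneg _) hq).trans ?_
  have h := (convexOn_rpow hq).2 (sq_nonneg u) (sq_nonneg v)
    (by norm_num : (0 : ℝ) ≤ 1 / 2) (by norm_num : (0 : ℝ) ≤ 1 / 2) (by norm_num)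
  simp only [smul_eq_mul] at h
  calc _ = (1 / 2 * u ^ 2 + 1 / 2 * v ^ 2) ^ (p / 2) := by ring_nf
    _ ≤ _ := h
    _ = _ := by ring

variable {α E : Type*} [NormedAddCommGroup E] [NormedSpace ℝ E] {q : ℝ≥0∞} [Fact (1 ≤ q)]

lemma satisfiesClarkson_lp (hq : 0 < q.toReal) (hE : SatisfiesClarkson q.toReal E) :
    SatisfiesClarkson q.toReal (lp (fun _ : α => E) q) := by
  intro u v
  have hs : ∀ w : lp (fun _ : α => E) q, Summable fun i => ‖w i‖ ^ q.toReal :=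
    fun w => (lp.memℓp w).summable hq
  simp only [lp.norm_rpow_eq_tsum hq]
  rw [← (hs _).tsum_add (hs _), ← (hs u).tsum_add (hs v), ← tsum_div_const]
  exact ((hs _).add (hs _)).tsum_le_tsum (fun i => hE (u i) (v i)) (((hs u).add (hs v)).div_const 2)

end Clarkson

section RightTranslation

open scoped ENNReal

variable {G E : Type*} [Group G] [NormedAddCommGroup E] {q : ℝ≥0∞}

lemma Memℓp.comp_mul_right (hq : 0 < q.toReal) {f : G → E} (hf : Memℓp f q) (g : G) :
    Memℓp (fun x => f (x * g)) q :=
  memℓp_gen ((Equiv.mulRight g).summable_iff (f := fun x => ‖f x‖ ^ q.toReal) |>.2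
    (hf.summable hq))

/-- The action of a group by right translations on the `E`-valued `ℓ^q` functions on it. -/
def rightTranslation (G E : Type*) [Group G] [NormedAddCommGroup E] [NormedSpace ℝ E]
    {q : ℝ≥0∞} (hq : 0 < q.toReal) : Representation ℝ G (lp (fun _ : G => E) q) where
  toFun g :=
    { toFun f := ⟨fun x => f (x * g), (lp.memℓp f).comp_mul_right hq g⟩
      map_add' _ _ := rfl
      map_smul' _ _ := rfl }
  map_one' := by
    ext f x
    exact congrArg f (mul_one x)
  map_mul' g h := by
    ext f x
    exact congrArg f (mul_assoc x g h).symm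

variable [NormedSpace ℝ E]

lemma norm_rightTranslation (hq : 0 < q.toReal) (g : G) (f : lp (fun _ : G => E) q) :
    ‖rightTranslation G E hq g f‖ = ‖f‖ := by
  rw [lp.norm_eq_tsum_rpow hq, lp.norm_eq_tsum_rpow hq]
  congr 1
  exact (Equiv.mulRight g).tsum_eq fun x => ‖f x‖ ^ q.toReal

end RightTranslation

section Support

open scoped ENNReal

variable {α E : Type*} [NormedAddCommGroup E] {q : ℝ≥0∞}

lemma lp.norm_le_card_rpow_mul (hq : 0 < q.toReal) {f : lp (fun _ : α => E) q} {S : Finset α}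
    {C : ℝ} (hC : 0 ≤ C) (hS : ∀ x ∉ S, f x = 0) (hf : ∀ x, ‖f x‖ ≤ C) :
    ‖f‖ ≤ (S.card : ℝ) ^ (1 / q.toReal) * C := by
  refine lp.norm_le_of_tsum_le hq (by positivity) ?_
  rw [tsum_eq_sum (s := S) fun x hx => by
      rw [norm_eq_zero.2 (hS x hx), Real.zero_rpow hq.ne'],
    Real.mul_rpow (by positivity) hC, ← Real.rpow_mul (by positivity),
    one_div_mul_cancel hq.ne', Real.rpow_one, ← nsmul_eq_mul]
  exact Finset.sum_le_card_nsmul _ _ _ fun x _ => Real.rpow_le_rpow (norm_nonneg _) (hf x) hq.le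

lemma lp.card_rpow_mul_le_norm (hq : 0 < q.toReal) {f : lp (fun _ : α => E) q} {S : Finset α}
    {c : ℝ} (hc : 0 ≤ c) (hf : ∀ x ∈ S, c ≤ ‖f x‖) :
    (S.card : ℝ) ^ (1 / q.toReal) * c ≤ ‖f‖ := by
  rw [← Real.rpow_le_rpow_iff (by positivity) (lp.norm_nonneg' f) hq,
    Real.mul_rpow (by positivity) hc, ← Real.rpow_mul (by positivity),
    one_div_mul_cancel hq.ne', Real.rpow_one, ← nsmul_eq_mul]
  exact (Finset.card_nsmul_le_sum _ _ _ fun x hx => Real.rpow_le_rpow hc (hf x hx) hq.le).trans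
    (lp.sum_rpow_le_norm_rpow hq f S)

end Support

namespace DH

open scoped ENNReal

/-- The finite set of elements with coordinates in prescribed finite sets. -/
def box (s t u : Finset ℤ) : Finset DH :=
  (s ×ˢ t ×ˢ u).map ⟨fun w => ⟨w.1, w.2.1, w.2.2⟩, fun v w h => by
    simpa [Prod.ext_iff] using h⟩

lemma mem_box {s t u : Finset ℤ} {g : DH} : g ∈ box s t u ↔ g.x ∈ s ∧ g.y ∈ t ∧ g.z ∈ u := by
  simp only [box, Finset.mem_map, Finset.mem_product, Prod.exists]
  exact ⟨by rintro ⟨x, y, z, h, rfl⟩; exact h, fun h => ⟨g.x, g.y, g.z, h, rfl⟩⟩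

lemma card_box (s t u : Finset ℤ) : (box s t u).card = s.card * (t.card * u.card) := by
  simp [box]

lemma exists_finset_of_wordLen_le {m : ℕ} (hm : 1 ≤ m) :
    ∃ S : Finset DH, (S.card : ℝ) ≤ 27 * m ^ 4 ∧ ∀ g, wordLen g ≤ m → g ∈ S := by
  refine ⟨box (Finset.Icc (-m) m) (Finset.Icc (-m) m) (Finset.Icc (-(m ^ 2 : ℕ)) (m ^ 2 : ℕ)),
    ?_, fun g hg => ?_⟩
  · have h : ∀ k : ℕ, 1 ≤ k → (Finset.Icc (-(k : ℤ)) k).card ≤ 3 * k := by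
      intro k hk
      rw [Int.card_Icc]
      omega
    rw [card_box]
    calc _ ≤ (((3 * m) * ((3 * m) * (3 * m ^ 2)) : ℕ) : ℝ) := by
          exact_mod_cast Nat.mul_le_mul (h m hm)
            (Nat.mul_le_mul (h m hm) (h (m ^ 2) (Nat.one_le_pow _ _ hm)))
      _ = _ := by push_cast; ring
  · have := (wordLen_le_iff.1 hg).box
    simpa only [mem_box, Finset.mem_Icc, ← abs_le, Nat.cast_pow] using this

lemma exists_finset_wordLen_le {r : ℕ} (hr : 1 ≤ r) :
    ∃ S : Finset DH, (S.card : ℝ) = r ^ 4 ∧ ∀ g ∈ S, wordLen g ≤ 8 * r := by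
  refine ⟨box (Finset.Ico 0 r) (Finset.Ico 0 r) (Finset.Ico 0 (r ^ 2 : ℕ)), ?_, fun g hg => ?_⟩
  · rw [card_box]
    simp only [Int.card_Ico, sub_zero, Int.toNat_natCast]
    push_cast
    ring
  · simp only [mem_box, Finset.mem_Ico] at hg
    obtain ⟨⟨hx, hx'⟩, ⟨hy, hy'⟩, hz, hz'⟩ := hg
    refine wordLen_le_iff.2 (hasWord_of_box hr ?_ ?_ ?_)
    · rw [abs_of_nonneg hx]; exact hx'.le
    · rw [abs_of_nonneg hy]; exact hy'.le
    · rw [abs_of_nonneg hz]; exact_mod_cast hz'.le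

/-- A cutoff function on the real line, equal to `1` on `(-∞, 1]` and to `0` on `[2, ∞)`. -/
noncomputable def cutoff (t : ℝ) : ℝ := max 0 (min 1 (2 - t))

lemma abs_cutoff_sub_le (s t : ℝ) : |cutoff s - cutoff t| ≤ |s - t| := by
  unfold cutoff
  rw [abs_le]
  constructor <;> cases abs_cases (s - t) <;>
    rcases max_cases 0 (min 1 (2 - s)) with h | h <;>
    rcases max_cases 0 (min 1 (2 - t)) with h' | h' <;>
    rcases min_cases 1 (2 - s) with ht' | ht' <;>
    rcases min_cases 1 (2 - t) with hs' | hs' <;> linarith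

lemma abs_cutoff_le (t : ℝ) : |cutoff t| ≤ 1 := by
  rw [cutoff, abs_of_nonneg (le_max_left _ _)]
  simp

lemma cutoff_of_le {t : ℝ} (h : t ≤ 1) : cutoff t = 1 := by
  rw [cutoff, min_eq_left (by linarith), max_eq_right zero_le_one]

lemma cutoff_of_ge {t : ℝ} (h : 2 ≤ t) : cutoff t = 0 :=
  max_eq_left (min_le_of_right_le (by linarith))

variable {E : Type*} [NormedAddCommGroup E] {q : ℝ≥0∞}

variable {r : ℕ} {f : DH → E} {D : ℝ}

lemma norm_sub_one_le (hD : 1 ≤ D) (hf : ∀ x y, wordLen x ≤ 64 * r → wordLen y ≤ 64 * r →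
    ‖f x - f y‖ ≤ D * dW x y) {x : DH} (hx : wordLen x ≤ 32 * r) :
    ‖f x - f 1‖ ≤ 32 * r * D := by
  have h1 : wordLen 1 ≤ 64 * r := wordLen_le_iff.2 ⟨[], by simp⟩
  have hx' : (wordLen x : ℝ) ≤ 32 * r := by exact_mod_cast hx
  refine (hf x 1 (by omega) h1).trans ?_
  rw [dW_one_right]
  nlinarith

variable [NormedSpace ℝ E]

/-- A function on `ℍ`, normalized to vanish at `1` and cut off at distance about `16 r`. -/
noncomputable def truncation (r : ℕ) (f : DH → E) (x : DH) : E :=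
  cutoff (wordLen x / (16 * r)) • (f x - f 1)

lemma truncation_eq_zero (hr : 1 ≤ r) {x : DH} (hx : 32 * r ≤ wordLen x) :
    truncation r f x = 0 := by
  have hr' : (1 : ℝ) ≤ r := by exact_mod_cast hr
  have hx' : (32 * r : ℝ) ≤ wordLen x := by exact_mod_cast hx
  rw [truncation, cutoff_of_ge, zero_smul]
  rw [le_div_iff₀ (by positivity)]
  linarith

lemma truncation_of_le (hr : 1 ≤ r) {x : DH} (hx : wordLen x ≤ 16 * r) :
    truncation r f x = f x - f 1 := by
  have hr' : (1 : ℝ) ≤ r := by exact_mod_cast hr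
  have hx' : (wordLen x : ℝ) ≤ 16 * r := by exact_mod_cast hx
  rw [truncation, cutoff_of_le, one_smul]
  rw [div_le_one (by positivity)]
  exact hx'

lemma norm_truncation_le (hr : 1 ≤ r) (hD : 1 ≤ D)
    (hf : ∀ x y, wordLen x ≤ 64 * r → wordLen y ≤ 64 * r → ‖f x - f y‖ ≤ D * dW x y) (x : DH) :
    ‖truncation r f x‖ ≤ 32 * r * D := by
  rcases le_total (32 * r) (wordLen x) with hx | hx
  · rw [truncation_eq_zero hr hx, norm_zero]
    positivity
  · rw [truncation, norm_smul, Real.norm_eq_abs]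
    exact (mul_le_of_le_one_left (norm_nonneg _) (abs_cutoff_le _)).trans
      (norm_sub_one_le hD hf hx)

lemma norm_truncation_mul_sub_le (hr : 1 ≤ r) (hD : 1 ≤ D)
    (hf : ∀ x y, wordLen x ≤ 64 * r → wordLen y ≤ 64 * r → ‖f x - f y‖ ≤ D * dW x y)
    {s : DH} (hs : wordLen s ≤ 1) (x : DH) :
    ‖truncation r f (x * s) - truncation r f x‖ ≤ 4 * D := by
  have h1 := wordLen_mul_le x s
  have h2 := wordLen_le_wordLen_mul_add x s
  rcases lt_or_ge (32 * r) (wordLen x) with hx | hx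
  · rw [truncation_eq_zero hr (by omega), truncation_eq_zero hr hx.le, sub_zero, norm_zero]
    positivity
  have hr' : (1 : ℝ) ≤ r := by exact_mod_cast hr
  have key : truncation r f (x * s) - truncation r f x =
      cutoff (wordLen (x * s) / (16 * r)) • (f (x * s) - f x) +
        (cutoff (wordLen (x * s) / (16 * r)) - cutoff (wordLen x / (16 * r))) •
          (f x - f 1) := by
    simp only [truncation]
    module
  have hA : ‖f (x * s) - f x‖ ≤ D := by
    rw [norm_sub_rev]
    refine (hf _ _ (by omega) (by omega)).trans ?_
    rw [dW_mul_right]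
    have : (wordLen s : ℝ) ≤ 1 := by exact_mod_cast hs
    nlinarith
  have hB : |cutoff (wordLen (x * s) / (16 * r)) - cutoff (wordLen x / (16 * r))| ≤
      1 / (16 * r) := by
    refine (abs_cutoff_sub_le _ _).trans ?_
    rw [← sub_div, abs_div, abs_of_pos (by positivity : (0 : ℝ) < 16 * r)]
    gcongr
    have h1' : (wordLen (x * s) : ℝ) ≤ wordLen x + wordLen s := by exact_mod_cast h1
    have h2' : (wordLen x : ℝ) ≤ wordLen (x * s) + wordLen s := by exact_mod_cast h2
    have hs' : (wordLen s : ℝ) ≤ 1 := by exact_mod_cast hs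
    rw [abs_le]
    constructor <;> linarith
  rw [key]
  calc _ ≤ 1 * D + 1 / (16 * r) * (32 * r * D) := by
        refine (norm_add_le _ _).trans ?_
        rw [norm_smul, norm_smul, Real.norm_eq_abs, Real.norm_eq_abs]
        gcongr
        · exact abs_cutoff_le _
        · exact norm_sub_one_le hD hf hx
    _ = 3 * D := by field_simp; ring
    _ ≤ 4 * D := by linarith

lemma le_norm_truncation_mul_sub (hr : 1 ≤ r)
    (hf : ∀ x y, wordLen x ≤ 64 * r → wordLen y ≤ 64 * r → (dW x y : ℝ) ≤ ‖f x - f y‖)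
    {h x : DH} (hh : wordLen h ≤ 8 * r) (hx : wordLen x ≤ 8 * r) :
    (wordLen h : ℝ) ≤ ‖truncation r f (x * h) - truncation r f x‖ := by
  have h1 := wordLen_mul_le x h
  rw [truncation_of_le hr (by omega), truncation_of_le hr (by omega), sub_sub_sub_cancel_right,
    norm_sub_rev, ← dW_mul_right x]
  exact hf _ _ (by omega) (by omega)

lemma exists_lp_truncation (hq : 0 < q.toReal) (hr : 1 ≤ r) (hD : 1 ≤ D)
    (hf : ∀ x y, wordLen x ≤ 64 * r → wordLen y ≤ 64 * r →
      (dW x y : ℝ) ≤ ‖f x - f y‖ ∧ ‖f x - f y‖ ≤ D * dW x y) :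
    ∃ F : lp (fun _ : DH => E) q,
      ‖F‖ ≤ (27 * (32 * r) ^ 4) ^ (1 / q.toReal) * (32 * r * D) ∧
      (∀ s, wordLen s ≤ 1 → ‖rightTranslation DH E hq s F - F‖ ≤
        (27 * (32 * r) ^ 4) ^ (1 / q.toReal) * (4 * D)) ∧
      ∀ h, wordLen h ≤ 8 * r → ((r : ℝ) ^ 4) ^ (1 / q.toReal) * wordLen h ≤
        ‖rightTranslation DH E hq h F - F‖ := by
  obtain ⟨S, hSc, hS⟩ := exists_finset_of_wordLen_le (m := 32 * r) (by omega)
  obtain ⟨T, hTc, hT⟩ := exists_finset_wordLen_le hr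
  push_cast at hSc
  have hlo := fun x y hx hy => (hf x y hx hy).1
  have hup := fun x y hx hy => (hf x y hx hy).2
  have h0 : ∀ x ∉ S, 32 * r < wordLen x := fun x hx => not_le.1 fun h => hx (hS x h)
  have hmem : Memℓp (truncation r f) q := by
    refine memℓp_gen (summable_of_ne_finset_zero (s := S) fun x hx => ?_)
    rw [truncation_eq_zero hr (h0 x hx).le, norm_zero, Real.zero_rpow hq.ne']
  refine ⟨⟨truncation r f, hmem⟩, ?_, fun s hs => ?_, fun h hh => ?_⟩
  · refine (lp.norm_le_card_rpow_mul hq (S := S) (by positivity)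
      (fun x hx => truncation_eq_zero hr (h0 x hx).le) (norm_truncation_le hr hD hup)).trans ?_
    gcongr
  · refine (lp.norm_le_card_rpow_mul hq (S := S) (by positivity) (fun x hx => ?_)
      (norm_truncation_mul_sub_le hr hD hup hs)).trans ?_
    · have h1 := h0 x hx
      have h2 := wordLen_le_wordLen_mul_add x s
      change truncation r f (x * s) - truncation r f x = 0
      rw [truncation_eq_zero hr (by omega), truncation_eq_zero hr h1.le, sub_zero]
    · gcongr
  · rw [← hTc]
    exact lp.card_rpow_mul_le_norm hq (by positivity) fun x hx =>
      le_norm_truncation_mul_sub hr hlo hh (hT x hx)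

end DH

open DH in
lemma rpow_le_of_embedding_ball {p : ℝ} (hp : 2 ≤ p) [Fact (1 ≤ ENNReal.ofReal p)] {t : ℕ}
    {D : ℝ} (hD : 1 ≤ D) {f : DH → lp (fun _ : ℕ => ℝ) (ENNReal.ofReal p)}
    (hf : ∀ x y, wordLen x ≤ 64 * 2 ^ t → wordLen y ≤ 64 * 2 ^ t →
      (dW x y : ℝ) ≤ ‖f x - f y‖ ∧ ‖f x - f y‖ ≤ D * dW x y) :
    ((2 * t + 1 : ℕ) : ℝ) ^ (1 / p) ≤ 36320 * (27 * 32 ^ 4) * D := by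
  have hqp : (ENNReal.ofReal p).toReal = p := ENNReal.toReal_ofReal (by linarith)
  have hq : 0 < (ENNReal.ofReal p).toReal := by rw [hqp]; linarith
  have hV : SatisfiesClarkson p
      (lp (fun _ : DH => lp (fun _ : ℕ => ℝ) (ENNReal.ofReal p)) (ENNReal.ofReal p)) := by
    have h := satisfiesClarkson_real hp
    rw [← hqp] at h
    have h' := satisfiesClarkson_lp (α := DH) hq (satisfiesClarkson_lp (α := ℕ) hq h)
    rwa [hqp] at h'
  obtain ⟨F, hF, hF1, hF2⟩ := exists_lp_truncation hq Nat.one_le_two_pow hD hf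
  have hmain := sum_vertical_le_horizontal (by linarith) hV (norm_rightTranslation hq) F (2 * t + 1)
  rw [hqp] at hF hF1 hF2
  push_cast at hF hF1 hF2
  set J := 2 * t + 1 with hJ
  set Λ : ℝ := ((2 ^ t) ^ 4) ^ (1 / p) with hΛ
  have hΛ0 : 0 < Λ := by positivity
  have hJ1 : (1 : ℝ) ≤ J := by rw [hJ]; push_cast; linarith [Nat.cast_nonneg (α := ℝ) t]
  have hp1 : 1 / p ≤ 1 := by rw [div_le_one] <;> linarith
  have hC : ((27 * (32 * 2 ^ t) ^ 4 : ℝ)) ^ (1 / p) ≤ 27 * 32 ^ 4 * Λ := by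
    rw [mul_pow, ← mul_assoc, Real.mul_rpow (by norm_num) (by positivity)]
    gcongr
    exact Real.rpow_le_self_of_one_le (by norm_num) hp1
  have hlow : J * Λ ≤ ∑ k ∈ Finset.range J, (√2)⁻¹ ^ k *
      ‖rightTranslation DH _ hq (gC ^ 2 ^ k) F - F‖ := by
    calc J * Λ = ∑ k ∈ Finset.range J, Λ := by simp
      _ ≤ _ := Finset.sum_le_sum fun k hk => ?_
    have hk' : k ≤ t * 2 := by have := Finset.mem_range.1 hk; omega
    have hword : wordLen (gC ^ 2 ^ k) ≤ 8 * 2 ^ t := by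
      rw [gC_pow]
      refine wordLen_le_iff.2 (hasWord_of_box Nat.one_le_two_pow (by simp) (by simp) ?_)
      push_cast
      rw [abs_of_nonneg (by positivity), ← pow_mul]
      exact pow_le_pow_right₀ (by norm_num) hk'
    calc Λ = (√2)⁻¹ ^ k * (Λ * √2 ^ k) := by
          rw [mul_left_comm, ← mul_pow, inv_mul_cancel₀ (by positivity), one_pow, mul_one]
      _ ≤ _ := by
          gcongr
          refine le_trans ?_ (hF2 _ hword)
          gcongr
          exact le_wordLen_gC_two_pow k
  have hsJ : (√2)⁻¹ ^ J * 2 ^ t ≤ 1 := by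
    rw [inv_pow, inv_mul_le_one₀ (by positivity), hJ, pow_succ, pow_mul,
      Real.sq_sqrt (by norm_num)]
    exact le_mul_of_one_le_right (by positivity) (Real.one_le_sqrt.2 (by norm_num))
  have hP1 : 1 ≤ (J : ℝ) ^ (1 - 1 / p) := Real.one_le_rpow hJ1 (by linarith)
  have hsplit : (J : ℝ) = (J : ℝ) ^ (1 - 1 / p) * (J : ℝ) ^ (1 / p) := by
    rw [← Real.rpow_add (by linarith), sub_add_cancel, Real.rpow_one]
  set P := (J : ℝ) ^ (1 - 1 / p)
  have hup : P * Λ * (J : ℝ) ^ (1 / p) ≤ P * Λ * (36320 * (27 * 32 ^ 4) * D) := by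
    calc P * Λ * (J : ℝ) ^ (1 / p) = J * Λ := by rw [mul_right_comm, ← hsplit]
      _ ≤ 4480 * P * (27 * 32 ^ 4 * Λ * (4 * D) + 27 * 32 ^ 4 * Λ * (4 * D)) +
          15 * (√2)⁻¹ ^ J * (27 * 32 ^ 4 * Λ * (32 * 2 ^ t * D)) := by
        refine hlow.trans (hmain.trans ?_)
        gcongr
        · exact (hF1 gA wordLen_gA_le).trans (by gcongr)
        · exact (hF1 gB wordLen_gB_le).trans (by gcongr)
        · exact hF.trans (by gcongr)
      _ = P * Λ * (35840 * (27 * 32 ^ 4) * D) +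
          (√2)⁻¹ ^ J * 2 ^ t * (Λ * (480 * (27 * 32 ^ 4) * D)) := by ring
      _ ≤ P * Λ * (35840 * (27 * 32 ^ 4) * D) +
          P * (Λ * (480 * (27 * 32 ^ 4) * D)) := by
        gcongr
        exact hsJ.trans hP1
      _ = _ := by ring
  exact le_of_mul_le_mul_left hup (by positivity)

open DH in
/-- Corollary 1.3, case `p ∈ [2,∞)`: the distortion of the ball `B_n` in `ℓ_p`
is at least a constant multiple of `(log n)^{1/p}`. -/
theorem distortion_lower_bound_lp_ge_two (p : ℝ) (hp : 2 ≤ p)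
    [Fact (1 ≤ ENNReal.ofReal p)] :
    ∃ K : ℝ, 0 < K ∧
      ∀ n : ℕ, 2 ≤ n → ∀ D : ℝ, 1 ≤ D →
        ∀ f : DH → lp (fun _ : ℕ => ℝ) (ENNReal.ofReal p),
          (∀ x ∈ Ball n, ∀ y ∈ Ball n,
            (dW x y : ℝ) ≤ ‖f x - f y‖ ∧ ‖f x - f y‖ ≤ D * (dW x y : ℝ)) →
          K * Real.log n ^ (1 / p) ≤ D := by
  refine ⟨1 / (7 * (36320 * (27 * 32 ^ 4))), by norm_num, fun n hn D hD f hf => ?_⟩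
  have hp1 : 1 / p ≤ 1 := by rw [div_le_one] <;> linarith
  have hlog0 : 0 ≤ Real.log n := Real.log_natCast_nonneg n
  have hlog : Real.log n ≤ Nat.log 2 n + 1 := by
    have h : (n : ℝ) ≤ 2 ^ (Nat.log 2 n + 1) := by
      exact_mod_cast (Nat.lt_pow_succ_log_self one_lt_two n).le
    refine (Real.log_le_log (by positivity) h).trans ?_
    rw [Real.log_pow]
    push_cast
    exact mul_le_of_le_one_right (by positivity) (by linarith [Real.log_two_lt_d9])
  suffices h : Real.log n ^ (1 / p) ≤ 7 * (36320 * (27 * 32 ^ 4) * D) by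
    rw [one_div_mul_eq_div, div_le_iff₀ (by norm_num)]
    linarith
  obtain ⟨m, hm, hmD⟩ : ∃ m : ℝ, (0 ≤ m ∧ Real.log n ≤ 7 * m) ∧
      m ^ (1 / p) ≤ 36320 * (27 * 32 ^ 4) * D := by
    rcases lt_or_ge (Nat.log 2 n) 6 with h | h
    · refine ⟨1, ⟨zero_le_one, ?_⟩, ?_⟩
      · have : (Nat.log 2 n : ℝ) ≤ 6 := by exact_mod_cast h.le
        linarith
      · rw [Real.one_rpow]
        linarith
    · obtain ⟨t, ht⟩ := Nat.exists_eq_add_of_le h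
      have hn' : 64 * 2 ^ t ≤ n := by
        have := Nat.pow_log_le_self 2 (by omega : n ≠ 0)
        rwa [ht, pow_add] at this
      refine ⟨(2 * t + 1 : ℕ), ⟨by positivity, ?_⟩, rpow_le_of_embedding_ball hp hD
        fun x y hx hy => hf x (mem_ball_iff.2 (hx.trans hn')) y (mem_ball_iff.2 (hy.trans hn'))⟩
      rw [ht] at hlog
      push_cast at hlog ⊢
      linarith [Nat.cast_nonneg (α := ℝ) t]
  calc Real.log n ^ (1 / p) ≤ (7 * m) ^ (1 / p) := by gcongr; exact hm.2
    _ = 7 ^ (1 / p) * m ^ (1 / p) := Real.mul_rpow (by norm_num) hm.1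
    _ ≤ 7 * (36320 * (27 * 32 ^ 4) * D) := by
      refine mul_le_mul ?_ hmD (Real.rpow_nonneg hm.1 _) (by norm_num)
      exact Real.rpow_le_self_of_one_le (by norm_num) hp1
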